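/- Let L be a finite-dimensional graded maximal subalgebra of Vect_pol(E). Then L_1 = L ∩ Vect_1(E) ≠ 0. -/

import Mathlib

/-!
Suppose `L₁ = 0`.  A proper subalgebra containing `L` equals `L` by maximality, hence contains none
of the fields `x_i ℰ`, which have degree one.  So any subalgebra containing both `L` and some
`x_i ℰ` is everything; there are two such.

* The fields tangent to the subspace `F = L₋₁` of `E`.  Euler's identity
  `[∂_x, D](x) = (p + 1) D(x)` for `D` of degree `p` shows, by induction on `p`, that `D ∈ L` maps
  `F` to `F`.  Since constant fields transverse to `F` are not tangent to it, `F = E`.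
* The projective fields.  Now `L` contains all constant fields, and the same identity propagates
  `L₁ = 0` to `L_p = 0` for all `p ≥ 1`, so `L` consists of affine fields.  But `x_i² ℰ` is not
  projective, a contradiction.
-/

open MvPolynomial

/-- The Lie algebra of polynomial vector fields on `E = 𝕜^n`, realized as the
derivations of the polynomial algebra `𝕜[x_1, …, x_n]`. -/
abbrev Vect (𝕜 : Type*) [Field 𝕜] (n : ℕ) : Type _ :=
  Derivation 𝕜 (MvPolynomial (Fin n) 𝕜) (MvPolynomial (Fin n) 𝕜)

variable (𝕜 : Type*) [Field 𝕜] (n : ℕ)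

/-- The Euler vector field `ℰ = Σ x^j ∂_j`. -/
noncomputable def euler : Vect 𝕜 n :=
  MvPolynomial.mkDerivation 𝕜 fun i => MvPolynomial.X i

/-- `Vect_p(E)`: the eigenspace of `ad(ℰ)` for the eigenvalue `p`, i.e. the vector fields
with homogeneous coefficients of degree `p+1`. -/
noncomputable def VectP (p : ℤ) : Submodule 𝕜 (Vect 𝕜 n) :=
  Module.End.eigenspace (LieAlgebra.ad 𝕜 (Vect 𝕜 n) (euler 𝕜 n)) ((p : 𝕜))

/-- A Lie subalgebra `L` of `Vect_pol(E)` is graded if `L = ⊕_{p ≥ -1} (L ∩ Vect_p(E))`. -/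
def IsGradedSubalg (L : LieSubalgebra 𝕜 (Vect 𝕜 n)) : Prop :=
  L.toSubmodule = ⨆ p ≥ (-1 : ℤ), (L.toSubmodule ⊓ VectP 𝕜 n p)

/-- A Lie subalgebra `L` of `Vect_pol(E)` is maximal if the only subalgebras containing it
are `L` itself and `Vect_pol(E)`. -/
def IsMaxSubalg (L : LieSubalgebra 𝕜 (Vect 𝕜 n)) : Prop :=
  ∀ L' : LieSubalgebra 𝕜 (Vect 𝕜 n), L ≤ L' → L' = L ∨ L' = ⊤

section TwistedStabilizer

variable {R A : Type*} [CommRing R] [CommRing A] [Algebra R A]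

/-- The derivations `D` of `A` for which some first-order operator `D - a`, with `a : A` acting by
multiplication, preserves the subspace `M`.  This encodes both the fields tangent to a subvariety
(`M` its ideal) and the projective fields (`M` the polynomials of degree at most one). -/
def twistedStabilizer (M : Submodule R A) : LieSubalgebra R (Derivation R A A) where
  carrier := {D | ∃ a, ∀ f ∈ M, D f - a * f ∈ M}
  add_mem' := by
    rintro D D' ⟨a, h⟩ ⟨a', h'⟩
    refine ⟨a + a', fun f hf => ?_⟩
    convert! M.add_mem (h f hf) (h' f hf) using 1
    simp only [Derivation.add_apply]
    ring
  zero_mem' := ⟨0, fun f _ => by simp⟩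
  smul_mem' := by
    rintro c D ⟨a, h⟩
    refine ⟨c • a, fun f hf => ?_⟩
    simpa only [Derivation.smul_apply, smul_sub, smul_mul_assoc] using M.smul_mem c (h f hf)
  lie_mem' := by
    rintro D D' ⟨a, h⟩ ⟨a', h'⟩
    refine ⟨D a' - D' a, fun f hf => ?_⟩
    -- `[D - a, D' - a'] = [D, D'] - (D a' - D' a)`
    convert! M.sub_mem (h _ (h' f hf)) (h' _ (h f hf)) using 1
    simp only [Derivation.commutator_apply, map_sub, Derivation.leibniz, smul_eq_mul]
    ring

lemma mem_twistedStabilizer_ideal {I : Ideal A} {D : Derivation R A A} :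
    D ∈ twistedStabilizer (I.restrictScalars R) ↔ ∀ f ∈ I, D f ∈ I := by
  refine ⟨fun ⟨a, h⟩ f hf => ?_, fun h => ⟨0, fun f hf => by simpa using h f hf⟩⟩
  exact (I.sub_mem_iff_left (I.mul_mem_left a hf)).1 (h f hf)

end TwistedStabilizer

section ConstantFields

variable {R σ : Type*} [CommRing R]

/-- The constant vector field with value `v`, i.e. the directional derivative along `v`. -/
noncomputable def constField :
    (σ → R) →ₗ[R] Derivation R (MvPolynomial σ R) (MvPolynomial σ R) :=
  (mkDerivationEquiv R).toLinearMap ∘ₗ (Algebra.linearMap R (MvPolynomial σ R)).compLeft σ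

@[simp]
lemma constField_X (v : σ → R) (i : σ) : constField v (X i) = C (v i) :=
  mkDerivation_X R _ i

/-- The value at the point `x` of the vector field `D`. -/
noncomputable def valueAt (D : Derivation R (MvPolynomial σ R) (MvPolynomial σ R)) (x : σ → R) :
    σ → R :=
  fun i => eval x (D (X i))

@[simp]
lemma valueAt_constField (v x : σ → R) : valueAt (constField v) x = v := by
  ext i
  simp [valueAt]

lemma eval_derivation (D : Derivation R (MvPolynomial σ R) (MvPolynomial σ R)) (x : σ → R)
    (f : MvPolynomial σ R) : eval x (D f) = eval x (constField (valueAt D x) f) := by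
  induction f using MvPolynomial.induction_on with
  | C a => simp
  | add f g hf hg => simp [hf, hg]
  | mul_X f i hf => simp [hf, valueAt]

lemma eq_zero_of_valueAt_eq_zero [IsDomain R] [Infinite R]
    {D : Derivation R (MvPolynomial σ R) (MvPolynomial σ R)} (h : ∀ x, valueAt D x = 0) :
    D = 0 :=
  derivation_ext fun i => MvPolynomial.funext fun x => by
    simpa [valueAt] using congrFun (h x) i

/-- Restriction of a polynomial to the parametrized line `t ↦ x + t v`. -/
noncomputable def restrictLine (x v : σ → R) : MvPolynomial σ R →ₐ[R] Polynomial R :=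
  aeval fun i => Polynomial.C (x i) + Polynomial.C (v i) * Polynomial.X

@[simp]
lemma restrictLine_X (x v : σ → R) (i : σ) :
    restrictLine x v (X i) = Polynomial.C (x i) + Polynomial.C (v i) * Polynomial.X :=
  aeval_X _ i

lemma eval_restrictLine (x v : σ → R) (f : MvPolynomial σ R) (t : R) :
    (restrictLine x v f).eval t = eval (x + t • v) f := by
  induction f using MvPolynomial.induction_on with
  | C a => simp
  | add f g hf hg => simp [hf, hg]
  | mul_X f i hf => simp [hf, mul_comm t]

lemma derivative_restrictLine (x v : σ → R) (f : MvPolynomial σ R) :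
    Polynomial.derivative (restrictLine x v f) = restrictLine x v (constField v f) := by
  induction f using MvPolynomial.induction_on with
  | C a => simp
  | add f g hf hg => simp [hf, hg]
  | mul_X f i hf =>
    simp only [map_mul, restrictLine_X, Polynomial.derivative_mul, hf, Polynomial.derivative_C,
      zero_mul, Polynomial.derivative_X, mul_one, zero_add, Derivation.leibniz, constField_X,
      smul_eq_mul, map_add, algHom_C, Polynomial.algebraMap_eq]
    ring

lemma eval_constField_eq_zero [IsDomain R] [Infinite R] {F : Submodule R (σ → R)}
    {f : MvPolynomial σ R} (hf : ∀ x ∈ F, eval x f = 0) {x v : σ → R} (hx : x ∈ F) (hv : v ∈ F) :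
    eval x (constField v f) = 0 := by
  have hline : restrictLine x v f = 0 := Polynomial.funext fun t => by
    rw [eval_restrictLine, Polynomial.eval_zero, hf _ (F.add_mem hx (F.smul_mem t hv))]
  calc eval x (constField v f) = (restrictLine x v (constField v f)).eval 0 := by
        rw [eval_restrictLine, zero_smul, add_zero]
    _ = 0 := by rw [← derivative_restrictLine, hline, map_zero, Polynomial.eval_zero]

end ConstantFields

section TangentFields

variable {K σ : Type*} [Field K]

/-- The Lie algebra of vector fields tangent to the linear subspace `F`, defined through the
vanishing ideal of `F` so that closure under brackets is immediate. -/
noncomputable def tangentSubalg (F : Submodule K (σ → K)) :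
    LieSubalgebra K (Derivation K (MvPolynomial σ K) (MvPolynomial σ K)) :=
  twistedStabilizer ((vanishingIdeal K (F : Set (σ → K))).restrictScalars K)

lemma mem_tangentSubalg [Finite σ] [Infinite K] {F : Submodule K (σ → K)}
    {D : Derivation K (MvPolynomial σ K) (MvPolynomial σ K)} :
    D ∈ tangentSubalg F ↔ ∀ x ∈ F, valueAt D x ∈ F := by
  simp only [tangentSubalg, mem_twistedStabilizer_ideal, mem_vanishingIdeal_iff,
    aeval_eq_eval, SetLike.mem_coe]
  refine ⟨fun h x hx => ?_, fun h f hf x hx => ?_⟩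
  · cases nonempty_fintype σ
    classical
    by_contra hDx
    obtain ⟨φ, hφ, hF⟩ := Submodule.exists_le_ker_of_notMem hDx
    let coord (i : σ) : K := φ fun j => if i = j then 1 else 0
    let linearForm : MvPolynomial σ K := ∑ i, C (coord i) * X i
    have φ_apply (y : σ → K) : φ y = ∑ i, coord i * y i := by
      simp [coord, φ.pi_apply_eq_sum_univ y, mul_comm]
    have eval_linearForm (y : σ → K) : eval y linearForm = φ y := by
      simp [linearForm, φ_apply]
    refine hφ ?_
    calc φ (valueAt D x) = eval x (D linearForm) := by
          simp [linearForm, φ_apply, valueAt]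
      _ = 0 := h _ (fun y hy => (eval_linearForm y).trans (hF hy)) x hx
  · rw [eval_derivation]
    exact eval_constField_eq_zero hf hx (h x hx)

lemma eq_top_of_tangentSubalg_eq_top [Finite σ] [Infinite K] {F : Submodule K (σ → K)}
    (h : tangentSubalg F = ⊤) : F = ⊤ := by
  refine eq_top_iff.2 fun v _ => ?_
  have hv : constField v ∈ tangentSubalg F := h ▸ LieSubalgebra.mem_top _
  simpa using mem_tangentSubalg.1 hv 0 F.zero_mem

end TangentFields

section AffinePolynomials

variable (σ R : Type*) [CommSemiring R]

/-- The polynomials of degree at most one, as the sum of the constants and the linear forms. -/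
noncomputable def affinePoly : Submodule R (MvPolynomial σ R) :=
  homogeneousSubmodule σ R 0 ⊔ homogeneousSubmodule σ R 1

variable {σ R}

lemma totalDegree_le_one_of_mem_affinePoly {f : MvPolynomial σ R} (hf : f ∈ affinePoly σ R) :
    f.totalDegree ≤ 1 := by
  obtain ⟨c, hc, l, hl, rfl⟩ := Submodule.mem_sup.1 hf
  exact (totalDegree_add c l).trans (max_le (hc.totalDegree_le.trans zero_le_one) hl.totalDegree_le)

lemma C_mem_affinePoly (a : R) : C a ∈ affinePoly σ R :=
  Submodule.mem_sup_left (isHomogeneous_C σ a)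

lemma X_mem_affinePoly (i : σ) : X i ∈ affinePoly σ R :=
  Submodule.mem_sup_right (isHomogeneous_X R i)

end AffinePolynomials

section VectorFields

variable {𝕜 n}

@[simp]
lemma euler_X (i : Fin n) : euler 𝕜 n (X i) = X i :=
  mkDerivation_X _ _ _

@[simp]
lemma valueAt_euler (x : Fin n → 𝕜) : valueAt (euler 𝕜 n) x = x := by
  ext i
  simp [valueAt]

lemma euler_monomial (m : Fin n →₀ ℕ) (a : 𝕜) :
    euler 𝕜 n (monomial m a) = (m.degree : 𝕜) • monomial m a := by
  have hterm (i : Fin n) : monomial (m - Finsupp.single i 1) (m i : 𝕜) * X i =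
      m i • monomial m 1 := by
    rw [← X_mul_pderiv_monomial, pderiv_monomial, one_mul, mul_comm]
  rw [euler, mkDerivation_monomial, Finsupp.sum]
  simp only [smul_eq_mul, hterm]
  rw [← Finset.sum_smul, ← Finsupp.degree_apply, smul_comm, smul_monomial, smul_eq_mul, mul_one,
    Nat.cast_smul_eq_nsmul]

lemma coeff_euler (m : Fin n →₀ ℕ) (f : MvPolynomial (Fin n) 𝕜) :
    coeff m (euler 𝕜 n f) = m.degree * coeff m f := by
  induction f using MvPolynomial.induction_on' with
  | monomial s a =>
    rw [euler_monomial, coeff_smul, coeff_monomial]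
    split_ifs with h <;> simp [h]
  | add f g hf hg => simp [hf, hg, mul_add]

lemma euler_eq_smul_of_isHomogeneous {d : ℕ} {f : MvPolynomial (Fin n) 𝕜}
    (hf : f.IsHomogeneous d) : euler 𝕜 n f = (d : 𝕜) • f := by
  ext m
  rw [coeff_euler, coeff_smul, smul_eq_mul]
  by_cases hm : coeff m f = 0
  · simp [hm]
  · rw [not_imp_comm.1 hf.coeff_eq_zero hm]

lemma isHomogeneous_of_euler_eq_smul [CharZero 𝕜] {d : ℕ} {f : MvPolynomial (Fin n) 𝕜}
    (hf : euler 𝕜 n f = (d : 𝕜) • f) : f.IsHomogeneous d := by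
  intro m hm
  have hcoeff := congrArg (coeff m) hf
  rw [coeff_euler, coeff_smul, smul_eq_mul] at hcoeff
  have hdeg : m.degree = d := Nat.cast_injective (R := 𝕜) (mul_right_cancel₀ hm hcoeff)
  exact (DFunLike.congr_fun Finsupp.degree_eq_weight_one m).symm.trans hdeg

lemma mem_VectP {p : ℤ} {D : Vect 𝕜 n} : D ∈ VectP 𝕜 n p ↔ ⁅euler 𝕜 n, D⁆ = (p : 𝕜) • D :=
  Module.End.mem_eigenspace_iff

lemma euler_apply_of_mem_VectP {p : ℤ} {D : Vect 𝕜 n} (hD : D ∈ VectP 𝕜 n p)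
    (f : MvPolynomial (Fin n) 𝕜) : euler 𝕜 n (D f) = (p : 𝕜) • D f + D (euler 𝕜 n f) := by
  rw [← sub_eq_iff_eq_add, ← Derivation.commutator_apply, mem_VectP.1 hD, Derivation.smul_apply]

lemma lie_mem_VectP {p q : ℤ} {D D' : Vect 𝕜 n} (hD : D ∈ VectP 𝕜 n p)
    (hD' : D' ∈ VectP 𝕜 n q) : ⁅D, D'⁆ ∈ VectP 𝕜 n (p + q) := by
  refine mem_VectP.2 (derivation_ext fun i => ?_)
  simp only [Derivation.commutator_apply, Derivation.smul_apply, map_sub, map_add,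
    euler_apply_of_mem_VectP hD, euler_apply_of_mem_VectP hD', euler_X, Derivation.map_smul,
    Int.cast_add]
  module

lemma isHomogeneous_apply_of_mem_VectP [CharZero 𝕜] {p : ℤ} {d e : ℕ} {D : Vect 𝕜 n}
    {f : MvPolynomial (Fin n) 𝕜} (hD : D ∈ VectP 𝕜 n p) (hf : f.IsHomogeneous d)
    (hde : p + d = e) : (D f).IsHomogeneous e := by
  have hcast : (e : 𝕜) = p + d := mod_cast hde.symm
  apply isHomogeneous_of_euler_eq_smul
  rw [euler_apply_of_mem_VectP hD, euler_eq_smul_of_isHomogeneous hf, Derivation.map_smul, hcast,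
    add_smul]

lemma smul_mem_VectP {p : ℤ} {d : ℕ} {f : MvPolynomial (Fin n) 𝕜} {D : Vect 𝕜 n}
    (hf : f.IsHomogeneous d) (hD : D ∈ VectP 𝕜 n p) : f • D ∈ VectP 𝕜 n (p + d) := by
  refine mem_VectP.2 (derivation_ext fun i => ?_)
  simp only [Derivation.commutator_apply, Derivation.smul_apply, Derivation.leibniz,
    euler_eq_smul_of_isHomogeneous hf, euler_apply_of_mem_VectP hD, euler_X, smul_eq_mul,
    smul_eq_C_mul, Int.cast_add, Int.cast_natCast, map_add]
  ring

lemma X_smul_euler_mem_VectP_one (i : Fin n) :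
    (X i : MvPolynomial (Fin n) 𝕜) • euler 𝕜 n ∈ VectP 𝕜 n 1 := by
  have heuler : euler 𝕜 n ∈ VectP 𝕜 n 0 := mem_VectP.2 (by simp)
  simpa using smul_mem_VectP (isHomogeneous_X 𝕜 i) heuler

lemma X_smul_euler_ne_zero (i : Fin n) : (X i : MvPolynomial (Fin n) 𝕜) • euler 𝕜 n ≠ 0 :=
  fun h => mul_ne_zero (X_ne_zero (R := 𝕜) i) (X_ne_zero i)
    (by simpa using DFunLike.congr_fun h (X i))

lemma constField_mem_VectP (v : Fin n → 𝕜) : constField v ∈ VectP 𝕜 n (-1) :=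
  mem_VectP.2 (derivation_ext fun i => by simp [Derivation.commutator_apply])

lemma constField_valueAt_of_mem_VectP [CharZero 𝕜] {D : Vect 𝕜 n} (hD : D ∈ VectP 𝕜 n (-1))
    (x : Fin n → 𝕜) : constField (valueAt D x) = D := by
  refine derivation_ext fun i => ?_
  have hdeg := isHomogeneous_apply_of_mem_VectP hD (isHomogeneous_X 𝕜 i) (e := 0) (by simp)
  rw [← totalDegree_zero_iff_isHomogeneous, totalDegree_eq_zero_iff_eq_C] at hdeg
  rw [constField_X, valueAt, hdeg, eval_C]

/-- At the point `x`, differentiating along the constant field `x` amounts to applying `ℰ`. -/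
lemma valueAt_lie_constField {p : ℤ} {D : Vect 𝕜 n} (hD : D ∈ VectP 𝕜 n p) (x : Fin n → 𝕜) :
    valueAt ⁅constField x, D⁆ x = ((p : 𝕜) + 1) • valueAt D x := by
  ext i
  have h := congrArg (eval x) (euler_apply_of_mem_VectP hD (X i))
  rw [eval_derivation, valueAt_euler] at h
  simp [valueAt, Derivation.commutator_apply, h, add_mul]

/-- The subspace `L₋₁` of `E`: the vectors whose constant field lies in `L`. -/
noncomputable def constPart (L : LieSubalgebra 𝕜 (Vect 𝕜 n)) : Submodule 𝕜 (Fin n → 𝕜) :=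
  L.toSubmodule.comap constField

lemma mem_constPart {L : LieSubalgebra 𝕜 (Vect 𝕜 n)} {v : Fin n → 𝕜} :
    v ∈ constPart L ↔ constField v ∈ L :=
  Iff.rfl

lemma lie_constField_mem_inf_VectP {L : LieSubalgebra 𝕜 (Vect 𝕜 n)} {p : ℤ} {D : Vect 𝕜 n}
    {x : Fin n → 𝕜} (hx : x ∈ constPart L) (hD : D ∈ L.toSubmodule ⊓ VectP 𝕜 n (p + 1)) :
    ⁅constField x, D⁆ ∈ L.toSubmodule ⊓ VectP 𝕜 n p :=
  ⟨L.lie_mem hx hD.1, by simpa using lie_mem_VectP (constField_mem_VectP x) hD.2⟩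

lemma valueAt_mem_constPart [CharZero 𝕜] {L : LieSubalgebra 𝕜 (Vect 𝕜 n)} {p : ℤ} (hp : -1 ≤ p)
    {D : Vect 𝕜 n} (hD : D ∈ L.toSubmodule ⊓ VectP 𝕜 n p) {x : Fin n → 𝕜}
    (hx : x ∈ constPart L) : valueAt D x ∈ constPart L := by
  induction p, hp using Int.leInduction generalizing D with
  | base => rw [mem_constPart, constField_valueAt_of_mem_VectP hD.2]; exact hD.1
  | succ p hp ih =>
    have hne : ((p + 1 : ℤ) : 𝕜) + 1 ≠ 0 := by norm_cast; lia
    rw [← Submodule.smul_mem_iff _ hne, ← valueAt_lie_constField hD.2]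
    exact ih (lie_constField_mem_inf_VectP hx hD)

lemma le_tangentSubalg_constPart [CharZero 𝕜] {L : LieSubalgebra 𝕜 (Vect 𝕜 n)}
    (hL : IsGradedSubalg 𝕜 n L) : L ≤ tangentSubalg (constPart L) :=
  have : Infinite 𝕜 := CharZero.infinite 𝕜
  hL.trans_le <| iSup₂_le fun _ hp _ hD =>
    mem_tangentSubalg.2 fun _ hx => valueAt_mem_constPart hp hD hx

lemma smul_euler_mem_tangentSubalg [Infinite 𝕜] (F : Submodule 𝕜 (Fin n → 𝕜))
    (f : MvPolynomial (Fin n) 𝕜) : f • euler 𝕜 n ∈ tangentSubalg F := by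
  refine mem_tangentSubalg.2 fun x hx => ?_
  convert! F.smul_mem (eval x f) hx using 1
  ext i
  simp [valueAt]

lemma inf_VectP_eq_bot [CharZero 𝕜] {L : LieSubalgebra 𝕜 (Vect 𝕜 n)} (hL : constPart L = ⊤)
    {p q : ℤ} (hp : -1 ≤ p) (hLp : L.toSubmodule ⊓ VectP 𝕜 n p = ⊥) (hpq : p ≤ q) :
    L.toSubmodule ⊓ VectP 𝕜 n q = ⊥ := by
  induction q, hpq using Int.leInduction with
  | base => exact hLp
  | succ q hpq ih =>
    have : Infinite 𝕜 := CharZero.infinite 𝕜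
    refine (Submodule.eq_bot_iff _).2 fun D hD => eq_zero_of_valueAt_eq_zero fun x => ?_
    have hlie : ⁅constField x, D⁆ = 0 := by
      simpa [ih] using lie_constField_mem_inf_VectP (x := x) (by simp [hL]) hD
    have hsmul : (((q + 1 : ℤ) : 𝕜) + 1) • valueAt D x = 0 := by
      rw [← valueAt_lie_constField hD.2, hlie]
      rfl
    exact (smul_eq_zero_iff_right (by norm_cast; lia)).1 hsmul

variable (𝕜 n) in
/-- The Lie algebra of infinitesimal projective transformations, spanned by the affine fields and
the fields `ℓ ℰ` with `ℓ` a linear form, as the twisted stabilizer of the space of polynomials of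
degree at most one. -/
noncomputable def projectiveSubalg : LieSubalgebra 𝕜 (Vect 𝕜 n) :=
  twistedStabilizer (affinePoly (Fin n) 𝕜)

lemma mem_projectiveSubalg_of_mem_VectP [CharZero 𝕜] {p : ℤ} (hp : -1 ≤ p) (hp' : p ≤ 0)
    {D : Vect 𝕜 n} (hD : D ∈ VectP 𝕜 n p) : D ∈ projectiveSubalg 𝕜 n := by
  refine ⟨0, fun f hf => ?_⟩
  obtain ⟨c, hc, l, hl, rfl⟩ := Submodule.mem_sup.1 hf
  have hDc : D c = 0 := by
    rw [homogeneousSubmodule_zero, Submodule.mem_one] at hc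
    obtain ⟨a, rfl⟩ := hc
    exact D.map_algebraMap a
  rw [map_add, hDc, zero_add, zero_mul, sub_zero]
  obtain rfl | rfl : p = -1 ∨ p = 0 := by lia
  · exact Submodule.mem_sup_left (isHomogeneous_apply_of_mem_VectP hD hl (by simp))
  · exact Submodule.mem_sup_right (isHomogeneous_apply_of_mem_VectP hD hl (by simp))

lemma X_smul_euler_mem_projectiveSubalg (i : Fin n) :
    (X i : MvPolynomial (Fin n) 𝕜) • euler 𝕜 n ∈ projectiveSubalg 𝕜 n := by
  refine ⟨X i, fun f hf => ?_⟩
  obtain ⟨c, hc, l, hl, rfl⟩ := Submodule.mem_sup.1 hf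
  have hsub : ((X i : MvPolynomial (Fin n) 𝕜) • euler 𝕜 n) (c + l) - X i * (c + l) =
      -(X i * c) := by
    rw [Derivation.smul_apply, map_add, euler_eq_smul_of_isHomogeneous hc,
      euler_eq_smul_of_isHomogeneous hl, smul_eq_mul, Nat.cast_zero, zero_smul, Nat.cast_one,
      one_smul]
    ring
  rw [hsub]
  exact neg_mem (Submodule.mem_sup_right ((isHomogeneous_X 𝕜 i).mul hc))

lemma X_sq_smul_euler_notMem_projectiveSubalg (i : Fin n) :
    (X i ^ 2 : MvPolynomial (Fin n) 𝕜) • euler 𝕜 n ∉ projectiveSubalg 𝕜 n := by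
  rintro ⟨a, h⟩
  have ha : a.totalDegree ≤ 1 := by
    simpa using totalDegree_le_one_of_mem_affinePoly (h 1 (C_mem_affinePoly 1))
  have hX := totalDegree_le_one_of_mem_affinePoly (h (X i) (X_mem_affinePoly i))
  rw [Derivation.smul_apply, euler_X, smul_eq_mul, ← pow_succ] at hX
  have hdeg : (X i ^ 3 : MvPolynomial (Fin n) 𝕜).totalDegree ≤ 2 := by
    rw [← sub_add_cancel (X i ^ 3) (a * X i)]
    refine (totalDegree_add _ _).trans (max_le (hX.trans one_le_two) ?_)
    exact (totalDegree_mul _ _).trans (add_le_add ha (totalDegree_X i).le)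
  rw [totalDegree_X_pow] at hdeg
  lia

lemma le_projectiveSubalg [CharZero 𝕜] {L : LieSubalgebra 𝕜 (Vect 𝕜 n)}
    (hL : IsGradedSubalg 𝕜 n L) (hconst : constPart L = ⊤)
    (hL₁ : L.toSubmodule ⊓ VectP 𝕜 n 1 = ⊥) : L ≤ projectiveSubalg 𝕜 n := by
  refine hL.trans_le (iSup₂_le fun p hp => ?_)
  rcases le_or_gt p 0 with hp' | hp'
  · exact fun D hD => mem_projectiveSubalg_of_mem_VectP hp hp' hD.2
  · rw [inf_VectP_eq_bot hconst (by simp) hL₁ hp']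
    exact bot_le

end VectorFields

theorem statement7_general {𝕜 : Type*} [Field 𝕜] [CharZero 𝕜] {n : ℕ} (hn : 0 < n)
    {L : LieSubalgebra 𝕜 (Vect 𝕜 n)} (hgraded : IsGradedSubalg 𝕜 n L)
    (hmax : IsMaxSubalg 𝕜 n L) : L.toSubmodule ⊓ VectP 𝕜 n 1 ≠ ⊥ := by
  have : Infinite 𝕜 := CharZero.infinite 𝕜
  intro hL₁
  let i : Fin n := ⟨0, hn⟩
  have eq_top {S : LieSubalgebra 𝕜 (Vect 𝕜 n)} (hLS : L ≤ S)
      (hS : (X i : MvPolynomial (Fin n) 𝕜) • euler 𝕜 n ∈ S) : S = ⊤ := by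
    refine (hmax S hLS).resolve_left ?_
    rintro rfl
    exact X_smul_euler_ne_zero i
      ((Submodule.eq_bot_iff _).1 hL₁ _ ⟨hS, X_smul_euler_mem_VectP_one i⟩)
  have hconst : constPart L = ⊤ := eq_top_of_tangentSubalg_eq_top <|
    eq_top (le_tangentSubalg_constPart hgraded) (smul_euler_mem_tangentSubalg _ (X i))
  have hproj : projectiveSubalg 𝕜 n = ⊤ :=
    eq_top (le_projectiveSubalg hgraded hconst hL₁) (X_smul_euler_mem_projectiveSubalg i)
  exact X_sq_smul_euler_notMem_projectiveSubalg i (hproj ▸ LieSubalgebra.mem_top _)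

/-- Let `L` be a finite-dimensional graded maximal subalgebra of `Vect_pol(E)`.  Then
`L₁ = L ∩ Vect₁(E) ≠ 0`. -/
theorem statement7 (𝕜 : Type) [RCLike 𝕜] (n : ℕ) (hn : 0 < n)
    (L : LieSubalgebra 𝕜 (Vect 𝕜 n)) (hfd : FiniteDimensional 𝕜 L)
    (hgraded : IsGradedSubalg 𝕜 n L) (hmax : IsMaxSubalg 𝕜 n L) :
    L.toSubmodule ⊓ VectP 𝕜 n 1 ≠ ⊥ :=
  statement7_general hn hgraded hmax
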